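/- arXiv:1809.10779 — 2 statements merged into one kernel-verified Lean document; each statement's English description precedes it below -/
import Mathlib

section
/- For each integer m ≥ 4, let P_m be the simplicial complex on {1,…,m} whose faces are the empty set, all m singletons, and the two-element sets {1,2},{3,4},{4,5},…,{m−1,m}. Then P_m is a purely 2-dimensional complex, Rel(P_m;q) = (1−q)^{m−2}·(1 + (m−2)q − q²), and Rel(P_m;q) has the real root (m−2+√((m−2)²+4))/2, which is strictly greater than m−2. In particular, the reliability roots of purely 2-dimensional simplicial complexes are unbounded. -/
/-!
A face count settles the polynomial: `P_m` has one empty face, `m` singletons and `m - 2` edges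
(`{1,2}` and the `m - 3` edges of the path `3, 4, …, m`), so
`Rel = (1-q)^m + m q (1-q)^(m-1) + (m-2) q² (1-q)^(m-2)`, and `(1-q)^(m-2)` factors out
(`relPoly_Pcomplex`). The complex is pure because every vertex lies on an edge. The stated root is
the positive root of `1 + (m-2) q - q²`, and it exceeds `m - 2` since `√((m-2)² + 4) > m - 2`.
-/


open Finset

/-- A facet is a maximal face. -/
def IsFacet (C : Finset (Finset ℕ)) (F : Finset ℕ) : Prop :=
  F ∈ C ∧ ∀ G ∈ C, F ⊆ G → F = G

/-- A complex is purely `d`-dimensional if every facet has cardinality `d`. -/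
def PureDim (C : Finset (Finset ℕ)) (d : ℕ) : Prop :=
  ∀ F, IsFacet C F → F.card = d

/-- The reliability polynomial of a complex `C` on ground set `X`, as a function of `q : ℂ`. -/
noncomputable def relPoly (X : Finset ℕ) (C : Finset (Finset ℕ)) (q : ℂ) : ℂ :=
  ∑ F ∈ C, q ^ F.card * (1 - q) ^ (X.card - F.card)

/-- The complex `P_m` on `{1,…,m}` with faces `∅`, all singletons, and the pairs
`{1,2}, {3,4}, {4,5}, …, {m-1,m}`. -/
def Pcomplex (m : ℕ) : Finset (Finset ℕ) :=
  insert ∅ ((Finset.Icc 1 m).image fun i => ({i} : Finset ℕ)) ∪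
    insert ({1, 2} : Finset ℕ) ((Finset.Icc 3 (m - 1)).image fun i => ({i, i + 1} : Finset ℕ))

lemma mem_Pcomplex {m : ℕ} {F : Finset ℕ} :
    F ∈ Pcomplex m ↔ F = ∅ ∨ (∃ i, (1 ≤ i ∧ i ≤ m) ∧ {i} = F) ∨ F = {1, 2} ∨
      ∃ i, (3 ≤ i ∧ i ≤ m - 1) ∧ ({i, i + 1} : Finset ℕ) = F := by
  simp only [Pcomplex, mem_union, mem_insert, mem_image, mem_Icc, or_assoc]

lemma pair_mem_Pcomplex {m i : ℕ} (h3 : 3 ≤ i) (hi : i ≤ m - 1) :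
    ({i, i + 1} : Finset ℕ) ∈ Pcomplex m :=
  mem_Pcomplex.2 (Or.inr (Or.inr (Or.inr ⟨i, ⟨h3, hi⟩, rfl⟩)))

lemma one_two_mem_Pcomplex (m : ℕ) : ({1, 2} : Finset ℕ) ∈ Pcomplex m :=
  mem_Pcomplex.2 (Or.inr (Or.inr (Or.inl rfl)))

lemma card_pair_succ (i : ℕ) : ({i, i + 1} : Finset ℕ).card = 2 :=
  card_pair (by omega)

/-- Neither `∅` nor a singleton is maximal, since every vertex lies on an edge. -/
lemma pureDim_Pcomplex {m : ℕ} (hm : 4 ≤ m) : PureDim (Pcomplex m) 2 := by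
  rintro F ⟨hF, hmax⟩
  rcases mem_Pcomplex.1 hF with rfl | ⟨i, ⟨h1, him⟩, rfl⟩ | rfl | ⟨i, -, rfl⟩
  · rw [hmax _ (one_two_mem_Pcomplex m) (empty_subset _)]; rfl
  · by_cases h2 : i ≤ 2
    · rw [hmax _ (one_two_mem_Pcomplex m) (by
        rw [singleton_subset_iff, mem_insert, mem_singleton]; omega)]
      rfl
    · by_cases hi : i ≤ m - 1
      · rw [hmax _ (pair_mem_Pcomplex (by omega) hi) (by simp)]
        exact card_pair_succ i
      · -- the last vertex `m` lies on `{m - 1, m}`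
        rw [hmax _ (pair_mem_Pcomplex (i := m - 1) (by omega) le_rfl) (by
          rw [singleton_subset_iff, mem_insert, mem_singleton]; omega)]
        exact card_pair_succ _
  · rfl
  · exact card_pair_succ i

lemma card_le_two_of_mem_Pcomplex {m : ℕ} {F : Finset ℕ} (hF : F ∈ Pcomplex m) :
    F.card ≤ 2 := by
  rcases mem_Pcomplex.1 hF with rfl | ⟨i, -, rfl⟩ | rfl | ⟨i, -, rfl⟩
  · simp
  · simp
  · exact card_le_two
  · exact card_le_two

lemma pair_succ_injective : Function.Injective fun i : ℕ => ({i, i + 1} : Finset ℕ) := by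
  intro i j h
  have h : ({i, i + 1} : Finset ℕ) = {j, j + 1} := h
  have hi : i ∈ ({j, j + 1} : Finset ℕ) := h ▸ mem_insert_self _ _
  have hj : j ∈ ({i, i + 1} : Finset ℕ) := h ▸ mem_insert_self _ _
  simp only [mem_insert, mem_singleton] at hi hj
  omega

/-- Summing a function of the face cardinality over `P_m` reads off its face numbers
`1, m, m - 2`. -/
lemma sum_card_Pcomplex {m : ℕ} (hm : 4 ≤ m) (f : ℕ → ℂ) :
    ∑ F ∈ Pcomplex m, f F.card = f 0 + m * f 1 + ((m : ℂ) - 2) * f 2 := by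
  have hdisj : Disjoint (insert ∅ ((Icc 1 m).image fun i => ({i} : Finset ℕ)))
      (insert ({1, 2} : Finset ℕ) ((Icc 3 (m - 1)).image fun i => ({i, i + 1} : Finset ℕ))) := by
    -- the first part holds faces of cardinality at most one, the second those of cardinality two
    rw [disjoint_left]
    intro F hF hF'
    have hle : F.card ≤ 1 := by
      simp only [mem_insert, mem_image] at hF
      rcases hF with rfl | ⟨i, -, rfl⟩ <;> simp
    have heq : F.card = 2 := by
      simp only [mem_insert, mem_image] at hF'
      rcases hF' with rfl | ⟨i, -, rfl⟩
      · rfl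
      · exact card_pair_succ i
    omega
  have h0 : ∅ ∉ (Icc 1 m).image fun i => ({i} : Finset ℕ) := by simp
  have h12 : ({1, 2} : Finset ℕ) ∉ (Icc 3 (m - 1)).image fun i => ({i, i + 1} : Finset ℕ) := by
    rw [mem_image]
    rintro ⟨i, hi, h⟩
    have := pair_succ_injective (a₁ := i) (a₂ := 1) h
    rw [mem_Icc] at hi
    omega
  rw [Pcomplex, sum_union hdisj, sum_insert h0, sum_insert h12,
    sum_image (fun i _ j _ h => singleton_injective h),
    sum_image (fun i _ j _ h => pair_succ_injective h)]
  have h2 : ({1, 2} : Finset ℕ).card = 2 := rfl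
  simp only [card_empty, card_singleton, card_pair_succ, h2, sum_const, Nat.card_Icc,
    nsmul_eq_mul]
  obtain ⟨k, rfl⟩ := Nat.exists_eq_add_of_le hm
  rw [show 4 + k - 1 + 1 - 3 = k + 1 by omega, show 4 + k + 1 - 1 = 4 + k by omega]
  push_cast
  ring

lemma relPoly_Pcomplex {m : ℕ} (hm : 4 ≤ m) (q : ℂ) :
    relPoly (Icc 1 m) (Pcomplex m) q =
      (1 - q) ^ (m - 2) * (1 + ((m : ℂ) - 2) * q - q ^ 2) := by
  rw [relPoly, sum_card_Pcomplex hm fun c => q ^ c * (1 - q) ^ ((Icc 1 m).card - c),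
    Nat.card_Icc]
  obtain ⟨k, rfl⟩ := Nat.exists_eq_add_of_le hm
  rw [show 4 + k + 1 - 1 - 0 = k + 2 + 2 by omega, show 4 + k + 1 - 1 - 1 = k + 2 + 1 by omega,
    show 4 + k + 1 - 1 - 2 = k + 2 by omega, show 4 + k - 2 = k + 2 by omega]
  push_cast
  ring

/-- `P_m` is purely 2-dimensional, its reliability polynomial equals
`(1-q)^(m-2) (1 + (m-2)q - q²)`, and it has the real root `(m-2+√((m-2)²+4))/2 > m-2`;
hence reliability roots of purely 2-dimensional complexes are unbounded. -/
theorem Pcomplex_reliability (m : ℕ) (hm : 4 ≤ m) :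
    PureDim (Pcomplex m) 2 ∧ (∀ F ∈ Pcomplex m, F.card ≤ 2) ∧
      (∃ F ∈ Pcomplex m, F.card = 2) ∧
      (∀ q : ℂ, relPoly (Finset.Icc 1 m) (Pcomplex m) q =
        (1 - q) ^ (m - 2) * (1 + ((m : ℂ) - 2) * q - q ^ 2)) ∧
      relPoly (Finset.Icc 1 m) (Pcomplex m)
        ((((m : ℝ) - 2 + Real.sqrt (((m : ℝ) - 2) ^ 2 + 4)) / 2 : ℝ) : ℂ) = 0 ∧
      (m : ℝ) - 2 < ((m : ℝ) - 2 + Real.sqrt (((m : ℝ) - 2) ^ 2 + 4)) / 2 := by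
  refine ⟨pureDim_Pcomplex hm, fun F hF => card_le_two_of_mem_Pcomplex hF,
    ⟨_, one_two_mem_Pcomplex m, rfl⟩, relPoly_Pcomplex hm, ?_, ?_⟩
  · rw [relPoly_Pcomplex hm]
    have hs := Real.sq_sqrt (show (0 : ℝ) ≤ ((m : ℝ) - 2) ^ 2 + 4 by positivity)
    set s := Real.sqrt (((m : ℝ) - 2) ^ 2 + 4)
    have hroot : (1 : ℝ) + ((m : ℝ) - 2) * (((m : ℝ) - 2 + s) / 2)
        - (((m : ℝ) - 2 + s) / 2) ^ 2 = 0 := by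
      linear_combination (-1 / 4) * hs
    exact mul_eq_zero_of_right _ (by exact_mod_cast hroot)
  · have hlt : (m : ℝ) - 2 < Real.sqrt (((m : ℝ) - 2) ^ 2 + 4) :=
      Real.lt_sqrt_of_sq_lt (by linarith)
    linarith
end

section
/- For each integer m ≥ 5, let C be the simplicial complex on the vertex set {1,…,m} of the m-cycle whose faces are the empty set, all m singletons, and the m pairs of cyclically adjacent vertices {i,i+1} (indices mod m). Then C is a purely 2-dimensional shellable complex with F-vector ⟨1,m,m⟩, Rel(C;q) = (1−q)^{m−2}·(q² + (m−2)q + 1), and Rel(C;q) has a real root of absolute value strictly greater than m−3. In particular, the moduli of reliability roots of shellable complexes are unbounded. -/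
open Finset

/-- A nonempty purely `d`-dimensional complex is shellable if its facets can be listed as
`σ₁, …, σ_t` so that for each `j ≥ 2` the complex of subsets of `σ_j` lying in some earlier
`σ_i` is purely `(d-1)`-dimensional (every such subset lies in such a subset of size `d-1`). -/
def Shellable (C : Finset (Finset ℕ)) (d : ℕ) : Prop :=
  C.Nonempty ∧ PureDim C d ∧
    ∃ L : List (Finset ℕ), L.Nodup ∧ (∀ F, IsFacet C F ↔ F ∈ L) ∧
      ∀ j : Fin L.length, 0 < (j : ℕ) →
        ∀ τ : Finset ℕ, τ ⊆ L.get j → (∃ i : Fin L.length, (i : ℕ) < (j : ℕ) ∧ τ ⊆ L.get i) →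
          ∃ ρ : Finset ℕ, ρ.card = d - 1 ∧ τ ⊆ ρ ∧ ρ ⊆ L.get j ∧
            ∃ i : Fin L.length, (i : ℕ) < (j : ℕ) ∧ ρ ⊆ L.get i

/-- `faceCount C i` is the number of faces of cardinality `i` (the entry `F_i` of the F-vector). -/
def faceCount (C : Finset (Finset ℕ)) (i : ℕ) : ℕ :=
  (C.filter fun F => F.card = i).card

/-- The cycle complex on `{1,…,m}`: faces are `∅`, all singletons, and the `m` pairs of
cyclically adjacent vertices `{1,2}, …, {m-1,m}, {m,1}`. -/
def cycleComplex (m : ℕ) : Finset (Finset ℕ) :=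
  insert ∅ (((Finset.Icc 1 m).image fun i => ({i} : Finset ℕ)) ∪
    insert ({m, 1} : Finset ℕ) ((Finset.Icc 1 (m - 1)).image fun i => ({i, i + 1} : Finset ℕ)))

/-! Walking around the cycle, the edges `{1,2}, {2,3}, …, {m-1,m}, {m,1}` form a shelling: each
edge after the first contains the vertex it shares with its predecessor, so the empty face lies in
a common vertex, and a common face of two distinct edges has at most one element. The complex is
the disjoint union of the empty face, `m` vertices and `m` edges (`cycleComplex_eq`), separated by
cardinality; this gives the F-vector, and summing over the three layers (`sum_cycleComplex`) gives
`(1-q)^m + m q (1-q)^(m-1) + m q² (1-q)^(m-2)`, from which `(1-q)^(m-2)` factors out.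
The quadratic `q² + (m-2)q + 1` takes the value `4 - m < 0` at `3 - m` and the value `1` at
`2 - m`, so by the intermediate value theorem it has a real root strictly below `3 - m`. -/

/-- The `i`-th edge of the `m`-cycle on `{1,…,m}`, in cyclic order, for `0 ≤ i < m`. The edge of
index `m - 1` closes the cycle. -/
def cycleEdge (m i : ℕ) : Finset ℕ := if i + 1 = m then {m, 1} else {i + 1, i + 2}

lemma card_cycleEdge {m i : ℕ} (hm : 5 ≤ m) : (cycleEdge m i).card = 2 := by
  unfold cycleEdge
  split_ifs
  · exact card_pair (by lia)
  · exact card_pair (by lia)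

lemma mem_cycleEdge {m i v : ℕ} :
    v ∈ cycleEdge m i ↔ v = i + 1 ∨ (i + 1 = m ∧ v = 1) ∨ (i + 1 ≠ m ∧ v = i + 2) := by
  unfold cycleEdge
  split_ifs with h <;> simp <;> lia

/-- Distinct indices give distinct edges; this needs the cycle to have length at least three. -/
lemma cycleEdge_injective {m : ℕ} (hm : 5 ≤ m) : Function.Injective (cycleEdge m) := by
  intro i j h
  -- The first vertex of each edge must be a vertex of the other one.
  have h1 : i + 1 ∈ cycleEdge m j := h ▸ mem_cycleEdge.2 (Or.inl rfl)
  have h2 : j + 1 ∈ cycleEdge m i := h ▸ mem_cycleEdge.2 (Or.inl rfl)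
  rw [mem_cycleEdge] at h1 h2
  lia

lemma mem_cycleComplex {m : ℕ} (hm : 5 ≤ m) {F : Finset ℕ} :
    F ∈ cycleComplex m ↔ F = ∅ ∨ (∃ i < m, {i + 1} = F) ∨ ∃ i < m, cycleEdge m i = F := by
  simp only [cycleComplex, mem_insert, mem_union, mem_image, mem_Icc]
  refine or_congr Iff.rfl (or_congr ⟨?_, ?_⟩ ⟨?_, ?_⟩)
  · rintro ⟨i, hi, rfl⟩
    exact ⟨i - 1, by lia, by rw [Nat.sub_add_cancel hi.1]⟩
  · rintro ⟨i, hi, rfl⟩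
    exact ⟨i + 1, by lia, rfl⟩
  · rintro (rfl | ⟨i, hi, rfl⟩)
    · exact ⟨m - 1, by lia, if_pos (by lia)⟩
    · refine ⟨i - 1, by lia, ?_⟩
      rw [cycleEdge, if_neg (by lia), show i - 1 + 1 = i by lia, show i - 1 + 2 = i + 1 by lia]
  · rintro ⟨i, hi, rfl⟩
    by_cases h : i + 1 = m
    · exact Or.inl (if_pos h)
    · exact Or.inr ⟨i + 1, by lia, (if_neg h).symm⟩

lemma cycleComplex_eq {m : ℕ} (hm : 5 ≤ m) :
    cycleComplex m = {∅} ∪ ((range m).image (fun i => ({i + 1} : Finset ℕ)) ∪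
      (range m).image (cycleEdge m)) := by
  ext F
  simp [mem_cycleComplex hm]

/-- A sum over the faces, of a quantity depending only on the size of the face, splits along the
F-vector `⟨1, m, m⟩`. -/
lemma sum_cycleComplex {R : Type*} [Semiring R] {m : ℕ} (hm : 5 ≤ m) (f : ℕ → R) :
    ∑ F ∈ cycleComplex m, f F.card = f 0 + (m * f 1 + m * f 2) := by
  rw [cycleComplex_eq hm, sum_union, sum_union, sum_image, sum_image]
  · simp [card_cycleEdge hm]
  · exact (cycleEdge_injective hm).injOn
  · intro i _ j _ h
    simpa using h
  · rw [disjoint_left]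
    intro F h1 h2
    simp only [mem_image] at h1 h2
    obtain ⟨i, -, rfl⟩ := h1
    obtain ⟨j, -, h⟩ := h2
    have := card_cycleEdge (i := j) hm
    simp [h] at this
  · simp only [disjoint_singleton_left, mem_union, mem_image, not_or]
    refine ⟨by simp, ?_⟩
    rintro ⟨j, -, h⟩
    have := card_cycleEdge (i := j) hm
    simp [h] at this

lemma faceCount_cycleComplex {m : ℕ} (hm : 5 ≤ m) (k : ℕ) :
    faceCount (cycleComplex m) k =
      (if 0 = k then 1 else 0) + (m * (if 1 = k then 1 else 0) + m * (if 2 = k then 1 else 0)) := by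
  rw [faceCount, card_filter]
  exact sum_cycleComplex hm fun c => if c = k then 1 else 0

lemma card_le_of_mem_cycleComplex {m : ℕ} (hm : 5 ≤ m) {F : Finset ℕ} (hF : F ∈ cycleComplex m) :
    F.card ≤ 2 := by
  rcases (mem_cycleComplex hm).1 hF with rfl | ⟨i, -, rfl⟩ | ⟨i, -, rfl⟩
  · simp
  · simp
  · exact (card_cycleEdge hm).le

lemma isFacet_cycleComplex {m : ℕ} (hm : 5 ≤ m) (F : Finset ℕ) :
    IsFacet (cycleComplex m) F ↔ ∃ i < m, cycleEdge m i = F := by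
  have hedge : ∀ i < m, cycleEdge m i ∈ cycleComplex m := fun i hi =>
    (mem_cycleComplex hm).2 (Or.inr (Or.inr ⟨i, hi, rfl⟩))
  constructor
  · rintro ⟨hF, hmax⟩
    rcases (mem_cycleComplex hm).1 hF with rfl | ⟨i, hi, rfl⟩ | h
    · exact ⟨0, by lia, (hmax _ (hedge 0 (by lia)) (empty_subset _)).symm⟩
    · exact ⟨i, hi, (hmax _ (hedge i hi)
        (singleton_subset_iff.2 (mem_cycleEdge.2 (Or.inl rfl)))).symm⟩
    · exact h
  · rintro ⟨i, hi, rfl⟩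
    refine ⟨hedge i hi, fun G hG hsub => eq_of_subset_of_card_le hsub ?_⟩
    rw [card_cycleEdge hm]
    exact card_le_of_mem_cycleComplex hm hG

lemma pureDim_cycleComplex {m : ℕ} (hm : 5 ≤ m) : PureDim (cycleComplex m) 2 := by
  intro F hF
  obtain ⟨i, -, rfl⟩ := (isFacet_cycleComplex hm F).1 hF
  exact card_cycleEdge hm

lemma shellable_cycleComplex {m : ℕ} (hm : 5 ≤ m) : Shellable (cycleComplex m) 2 := by
  refine ⟨⟨∅, (mem_cycleComplex hm).2 (Or.inl rfl)⟩, pureDim_cycleComplex hm,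
    (List.range m).map (cycleEdge m), ?_, ?_, ?_⟩
  · exact List.nodup_range.map (cycleEdge_injective hm)
  · intro F
    simp [isFacet_cycleComplex hm]
  · rintro ⟨j, hj⟩ hj0 τ hτj ⟨⟨i, hi⟩, hij, hτi⟩
    have hjm : j < m := by simpa using hj
    simp only [List.get_eq_getElem, List.getElem_map, List.getElem_range] at hτj hτi hij hj0 ⊢
    rcases τ.eq_empty_or_nonempty with rfl | hne
    · -- Vertex `j + 1` is shared by the edges of index `j - 1` and `j`.
      refine ⟨{j + 1}, rfl, empty_subset _, singleton_subset_iff.2 (mem_cycleEdge.2 (Or.inl rfl)),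
        ⟨j - 1, by lia⟩, by simp; lia, singleton_subset_iff.2 (mem_cycleEdge.2 ?_)⟩
      lia
    · refine ⟨τ, ?_, Subset.refl _, hτj, ⟨i, hi⟩, hij, hτi⟩
      have h1 := hne.card_pos
      have h2 := card_le_card hτj
      rw [card_cycleEdge hm] at h2
      -- A two-element common face would force the two edges to coincide.
      have h3 : τ.card ≠ 2 := by
        intro h
        have e1 := eq_of_subset_of_card_le hτj (by rw [card_cycleEdge hm, h])
        have e2 := eq_of_subset_of_card_le hτi (by rw [card_cycleEdge hm, h])
        have := cycleEdge_injective hm (e2.symm.trans e1)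
        lia
      lia

lemma relPoly_cycleComplex {m : ℕ} (hm : 5 ≤ m) (q : ℂ) :
    relPoly (Finset.Icc 1 m) (cycleComplex m) q =
      (1 - q) ^ (m - 2) * (q ^ 2 + ((m : ℂ) - 2) * q + 1) := by
  rw [relPoly, sum_cycleComplex hm fun c => q ^ c * (1 - q) ^ ((Finset.Icc 1 m).card - c)]
  obtain ⟨n, rfl⟩ := Nat.exists_eq_add_of_le' (show 2 ≤ m by lia)
  simp only [Nat.card_Icc, Nat.add_sub_cancel, Nat.sub_zero, show n + 2 - 1 = n + 1 by lia]
  push_cast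
  ring

lemma exists_root_quadratic {m : ℕ} (hm : 5 ≤ m) :
    ∃ x : ℝ, x ^ 2 + ((m : ℝ) - 2) * x + 1 = 0 ∧ (m : ℝ) - 3 < |x| := by
  have hm' : (5 : ℝ) ≤ m := by exact_mod_cast hm
  obtain ⟨x, hx, h0⟩ := intermediate_value_Icc' (a := 2 - (m : ℝ)) (b := 3 - m) (by linarith)
    (f := fun x : ℝ => x ^ 2 + ((m : ℝ) - 2) * x + 1) (by fun_prop)
    (show (0 : ℝ) ∈ Set.Icc _ _ from ⟨by ring_nf; linarith, by ring_nf; norm_num⟩)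
  refine ⟨x, h0, ?_⟩
  -- The quadratic is negative at the endpoint `3 - m`, so the root is strictly to its left.
  have hne : x ≠ 3 - m := by
    rintro rfl
    ring_nf at h0
    linarith
  have hlt := lt_of_le_of_ne hx.2 hne
  rw [abs_of_neg (by linarith)]
  linarith

/-- for `m ≥ 5` the cycle complex is purely 2-dimensional and shellable with
F-vector `⟨1,m,m⟩`, its reliability polynomial is `(1-q)^(m-2) (q² + (m-2)q + 1)`, and it has
a real root of absolute value `> m-3`; hence moduli of reliability roots of shellable
complexes are unbounded. -/
theorem cycleComplex_reliability (m : ℕ) (hm : 5 ≤ m) :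
    PureDim (cycleComplex m) 2 ∧ (∀ F ∈ cycleComplex m, F.card ≤ 2) ∧
      Shellable (cycleComplex m) 2 ∧
      faceCount (cycleComplex m) 0 = 1 ∧ faceCount (cycleComplex m) 1 = m ∧
      faceCount (cycleComplex m) 2 = m ∧
      (∀ q : ℂ, relPoly (Finset.Icc 1 m) (cycleComplex m) q =
        (1 - q) ^ (m - 2) * (q ^ 2 + ((m : ℂ) - 2) * q + 1)) ∧
      ∃ q₀ : ℝ, relPoly (Finset.Icc 1 m) (cycleComplex m) ((q₀ : ℝ) : ℂ) = 0 ∧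
        (m : ℝ) - 3 < |q₀| := by
  refine ⟨pureDim_cycleComplex hm, fun F hF => card_le_of_mem_cycleComplex hm hF,
    shellable_cycleComplex hm, ?_, ?_, ?_, relPoly_cycleComplex hm, ?_⟩
  · simp [faceCount_cycleComplex hm]
  · simp [faceCount_cycleComplex hm]
  · simp [faceCount_cycleComplex hm]
  · obtain ⟨x, hx, hlt⟩ := exists_root_quadratic hm
    refine ⟨x, ?_, hlt⟩
    have hx' : (x : ℂ) ^ 2 + ((m : ℂ) - 2) * x + 1 = 0 := by
      have := congrArg Complex.ofReal hx
      push_cast at this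
      exact this
    rw [relPoly_cycleComplex hm, hx', mul_zero]
end
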